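/- Let X be a finite linear L-algebra (an L-algebra whose natural order x ≤ y ⟺ x·y = e is total). If p ≠ e is the smallest invariant element of X (i.e. p is invariant, and no invariant element is strictly smaller than p), then p·x > x for all x ≤ p. -/

import Mathlib

/-- The L-algebra axioms for a binary operation `op` with logical unit `e`. -/
def IsLAlgebra {X : Type*} (op : X → X → X) (e : X) : Prop :=
  (∀ x, op e x = x) ∧ (∀ x, op x e = e) ∧ (∀ x, op x x = e) ∧
  (∀ x y z, op (op x y) (op x z) = op (op y x) (op y z)) ∧
  (∀ x y, op x y = e → op y x = e → x = y)

/-- An element `x` is invariant if `y·x = x` for all `y > x`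
(where `x < y` means `x·y = e` and `x ≠ y`). -/
def LAlgInvariant {X : Type*} (op : X → X → X) (e : X) (x : X) : Prop :=
  ∀ y, op x y = e → y ≠ x → op y x = x

/-!
Left multiplication by `p` is an order embedding on `{x | x ≤ p}`, because the cycloid equation
gives `(p·x)·(p·z) = x·z` for `x ≤ p`. If `{x | x ≤ p}` is finite, this forces `x ≤ p·x` there, so
the claim can fail only if `p` fixes some `x < p`. In that case the greatest such fixed point `q` is
invariant, contradicting minimality: elements above the invariant element `p` act trivially on
everything below `p`, and for `q < y < p` we have `y·q = (p·y)·q` with `p·y > y`, so that `y` can be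
pushed up until it reaches `p`.
-/

theorem le_apply_of_strictMonoOn_Iic {α : Type*} [LinearOrder α] {f : α → α} {p x : α}
    (hfin : (Set.Iic p).Finite) (hf : StrictMonoOn f (Set.Iic p)) (hx : x ≤ p) : x ≤ f x := by
  by_contra! hlt
  obtain ⟨m, ⟨hmp, hm⟩, hmin⟩ :=
    (hfin.subset (Set.sep_subset _ fun y => f y < y)).exists_minimal ⟨x, hx, hlt⟩
  have hfmp : f m ≤ p := hm.le.trans hmp
  exact (hmin ⟨hfmp, hf hfmp hmp hm⟩ hm.le).not_gt hm

namespace IsLAlgebra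

variable {X : Type*} {op : X → X → X} {e : X}

theorem unit_op (hL : IsLAlgebra op e) (x : X) : op e x = x := hL.1 x

theorem op_unit (hL : IsLAlgebra op e) (x : X) : op x e = e := hL.2.1 x

theorem op_self (hL : IsLAlgebra op e) (x : X) : op x x = e := hL.2.2.1 x

theorem cycloid (hL : IsLAlgebra op e) (x y z : X) :
    op (op x y) (op x z) = op (op y x) (op y z) := hL.2.2.2.1 x y z

theorem eq_of_op_eq_unit (hL : IsLAlgebra op e) {x y : X} (hxy : op x y = e) (hyx : op y x = e) :
    x = y := hL.2.2.2.2 x y hxy hyx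

theorem op_op_op_of_op_eq_unit (hL : IsLAlgebra op e) {x y : X} (hxy : op x y = e) (z : X) :
    op (op y x) (op y z) = op x z := by
  rw [hL.cycloid, hxy, hL.unit_op]

theorem op_eq_unit_trans (hL : IsLAlgebra op e) {x y z : X} (hxy : op x y = e)
    (hyz : op y z = e) : op x z = e := by
  rw [← hL.op_op_op_of_op_eq_unit hxy, hyz, hL.op_unit]

/-- The natural order `x ≤ y ↔ x·y = e` of a linear L-algebra, bundled as a linear order so that the
order library applies. -/
noncomputable abbrev linearOrder (hL : IsLAlgebra op e)
    (htotal : ∀ x y, op x y = e ∨ op y x = e) : LinearOrder X where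
  le x y := op x y = e
  le_refl := hL.op_self
  le_trans _ _ _ := hL.op_eq_unit_trans
  le_antisymm _ _ := hL.eq_of_op_eq_unit
  le_total := htotal
  toDecidableLE := Classical.decRel _

section LinearOrder

variable [LinearOrder X] {p q x y : X}

theorem strictMonoOn_op (hL : IsLAlgebra op e) (hle : ∀ x y, x ≤ y ↔ op x y = e) (p : X) :
    StrictMonoOn (op p) (Set.Iic p) := by
  intro x _ y hy hxy
  rw [← not_le] at hxy ⊢
  rwa [hle, hL.op_op_op_of_op_eq_unit ((hle y p).1 hy), ← hle]

theorem le_op (hL : IsLAlgebra op e) (hle : ∀ x y, x ≤ y ↔ op x y = e)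
    (hfin : (Set.Iic p).Finite) (hx : x ≤ p) : x ≤ op p x :=
  le_apply_of_strictMonoOn_Iic hfin (hL.strictMonoOn_op hle p) hx

theorem op_eq_of_lt_invariant_of_invariant_lt (hL : IsLAlgebra op e)
    (hle : ∀ x y, x ≤ y ↔ op x y = e) (hp : LAlgInvariant op e p) (hxp : x < p) (hpy : p < y) :
    op y x = x := by
  have hpy' : op p y = e := (hle p y).1 hpy.le
  have hop : op p (op y x) = op p x := by
    simpa only [hp y hpy' hpy.ne'] using hL.op_op_op_of_op_eq_unit hpy' x
  rcases le_total (op y x) p with hyx | hyx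
  · exact (hL.strictMonoOn_op hle p).injOn hyx hxp.le hop
  · have hpx : p ≤ x := (hle p x).2 (hop ▸ (hle p _).1 hyx)
    exact absurd hpx hxp.not_ge

theorem invariant_of_maximal_fixed (hL : IsLAlgebra op e) (hle : ∀ x y, x ≤ y ↔ op x y = e)
    (hfin : (Set.Iic p).Finite) (hp : LAlgInvariant op e p)
    (hq : Maximal (fun x => x < p ∧ op p x = x) q) : LAlgInvariant op e q := by
  obtain ⟨⟨hqp, hpq⟩, hq_max⟩ := hq
  have op_eq_of_ge : ∀ y, p ≤ y → op y q = q := by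
    intro y hpy
    rcases hpy.eq_or_lt with rfl | hpy
    · exact hpq
    · exact hL.op_eq_of_lt_invariant_of_invariant_lt hle hp hqp hpy
  intro y hqy hyq
  by_contra hne
  have hyp : y < p := lt_of_not_ge fun hpy => hne (op_eq_of_ge y hpy)
  obtain ⟨m, ⟨hmp, hqm, hm⟩, hm_max⟩ :=
    (hfin.subset (Set.sep_subset _ fun y => q < y ∧ op y q ≠ q)).exists_maximal
      ⟨y, hyp.le, ((hle q y).2 hqy).lt_of_ne' hyq, hne⟩
  have hmp_lt : m < p := hmp.lt_of_ne fun h => hm (h ▸ hpq)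
  have hm_lt : m < op p m := (hL.le_op hle hfin hmp).lt_of_ne' fun hpm =>
    (hq_max ⟨hmp_lt, hpm⟩ hqm.le).not_gt hqm
  have hop : op (op p m) q = op m q := by
    simpa only [hpq] using hL.op_op_op_of_op_eq_unit ((hle m p).1 hmp) q
  have hpm : op p m < p := lt_of_not_ge fun h => hm (hop ▸ op_eq_of_ge _ h)
  exact (hm_max ⟨hpm.le, hqm.trans hm_lt, hop ▸ hm⟩ hm_lt.le).not_gt hm_lt

theorem exists_invariant_lt_of_op_eq_self (hL : IsLAlgebra op e)
    (hle : ∀ x y, x ≤ y ↔ op x y = e) (hfin : (Set.Iic p).Finite) (hp : LAlgInvariant op e p)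
    (hxp : x < p) (hfix : op p x = x) : ∃ q < p, LAlgInvariant op e q := by
  obtain ⟨q, hq⟩ := (hfin.subset fun y (hy : y < p ∧ op p y = y) => hy.1.le).exists_maximal
    ⟨x, hxp, hfix⟩
  exact ⟨q, hq.prop.1, hL.invariant_of_maximal_fixed hle hfin hp hq⟩

end LinearOrder

end IsLAlgebra

theorem linear_L_algebra_smallest_invariant_general
    {X : Type*} (op : X → X → X) (e : X)
    (hL : IsLAlgebra op e)
    (htotal : ∀ x y, op x y = e ∨ op y x = e)
    (p : X) (hfin : {x | op x p = e}.Finite) (hpe : p ≠ e)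
    (hp : LAlgInvariant op e p)
    (hmin : ∀ q, LAlgInvariant op e q → ¬ (op q p = e ∧ q ≠ p)) :
    ∀ x, op x p = e → (op x (op p x) = e ∧ op p x ≠ x) := by
  let _ : LinearOrder X := hL.linearOrder htotal
  have hle : ∀ x y : X, x ≤ y ↔ op x y = e := fun _ _ => Iff.rfl
  intro x hx
  refine ⟨hL.le_op hle hfin hx, fun hfix => ?_⟩
  have hxp : x ≠ p := by
    rintro rfl
    exact hpe (hfix.symm.trans (hL.op_self x))
  obtain ⟨q, hqp, hq⟩ :=
    hL.exists_invariant_lt_of_op_eq_self hle hfin hp (lt_of_le_of_ne hx hxp) hfix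
  exact hmin q hq ⟨hqp.le, hqp.ne⟩

/-- In a finite linear L-algebra (natural order `x ≤ y ⟺ x·y = e` is total),
if `p ≠ e` is the smallest invariant element, then `p·x > x` for all `x ≤ p`. -/
theorem linear_L_algebra_smallest_invariant
    {X : Type*} [Fintype X] (op : X → X → X) (e : X)
    (hL : IsLAlgebra op e)
    (htotal : ∀ x y, op x y = e ∨ op y x = e)
    (p : X) (hpe : p ≠ e)
    (hp : LAlgInvariant op e p)
    (hmin : ∀ q, LAlgInvariant op e q → ¬ (op q p = e ∧ q ≠ p)) :
    ∀ x, op x p = e → (op x (op p x) = e ∧ op p x ≠ x) := by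
  exact linear_L_algebra_smallest_invariant_general op e hL htotal p (Set.toFinite _) hpe hp hmin
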